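/- Let n be a positive integer, λ an infinite cardinal, and A a countably infinite subset of λ, and suppose 𝓘_λ^n carries an ω-bounded-pracompact shift-continuous T₁-topology. For α ∈ 𝓘_A^n write ↑_≼^A α = ↑_≼ α ∩ 𝓘_A^n. Then for every α ∈ 𝓘_A^n the set ↑_≼^A α ∩ (𝓘_A^n ∖ 𝓘_A^{n−1}) is dense in the subspace ↑_≼^A α of 𝓘_A^n. -/

import Mathlib

/-!
Every `β ∈ 𝓘_A^n` is a cluster point of a sequence of its top-rank extensions in `𝓘_A^n`, which
gives the density.

In a `T₁` shift-continuous topology each up-set `↑α` is clopen (`isClopen_Ici`): it is the preimage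
of `α⁻¹` under `x ↦ α⁻¹ x α⁻¹`, a continuous map with values in the finite, hence discrete, set of
partial bijections whose graph lies in `ran α × dom α`. In particular a point of rank `n` is
isolated, so it belongs to every dense set.

Given `β` of rank `k` in `𝓘_A^n`, extend it by identities on pairwise disjoint `(n - k)`-subsets of
`A` avoiding `dom β ∪ ran β`. This yields rank-`n` elements `β₀, β₁, …` such that a pair outside
`β` lies in at most one `βᵢ` (`exists_extensions`). They all lie in the dense set provided by
ω-bounded-pracompactness, so they have a cluster point `x`. It satisfies `β ≼ x` because `↑β` is
closed; and a pair `(a, b) ∈ x ∖ β` is impossible, because the open neighbourhood `↑{(a, b)}` of `x`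
would contain at most one `βᵢ`. Hence `x = β`.
-/

open Set Topology Filter

/-- The symmetric inverse semigroup `𝓘_γ^n` of partial bijections of the set `γ`
of rank `≤ n`, represented by their (finite) graphs. -/
structure SymInvSg (γ : Type*) (n : ℕ) where
  graph : Set (γ × γ)
  inj' : ∀ ⦃x y x' y'⦄, (x, y) ∈ graph → (x', y') ∈ graph → (x = x' ↔ y = y')
  finite' : graph.Finite
  card_le' : graph.ncard ≤ n

namespace SymInvSg

variable {γ : Type*} {n : ℕ}

theorem ext' {a b : SymInvSg γ n} (h : a.graph = b.graph) : a = b := by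
  cases a; cases b; simpa using h

/-- Composition of partial bijections (in the left-to-right convention of
transformation semigroups, the choice of convention being immaterial). -/
instance : Mul (SymInvSg γ n) where
  mul a b :=
    { graph := {p | ∃ y, (p.1, y) ∈ a.graph ∧ (y, p.2) ∈ b.graph}
      inj' := by
        rintro x z x' z' ⟨y, hxy, hyz⟩ ⟨y', hxy', hyz'⟩
        constructor
        · rintro rfl
          have hy : y = y' := (a.inj' hxy hxy').mp rfl
          subst hy
          exact (b.inj' hyz hyz').mp rfl
        · rintro rfl
          have hy : y = y' := (b.inj' hyz hyz').mpr rfl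
          subst hy
          exact (a.inj' hxy hxy').mpr rfl
      finite' := by
        have : {p : γ × γ | ∃ y, (p.1, y) ∈ a.graph ∧ (y, p.2) ∈ b.graph} ⊆
            (fun q : (γ × γ) × (γ × γ) => (q.1.1, q.2.2)) '' (a.graph ×ˢ b.graph) := by
          rintro ⟨x, z⟩ ⟨y, hxy, hyz⟩
          exact ⟨((x, y), (y, z)), ⟨hxy, hyz⟩, rfl⟩
        exact Set.Finite.subset (Set.Finite.image _ (a.finite'.prod b.finite')) this
      card_le' := by
        have hinj : Set.InjOn Prod.fst
            {p : γ × γ | ∃ y, (p.1, y) ∈ a.graph ∧ (y, p.2) ∈ b.graph} := by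
          rintro ⟨x, z⟩ ⟨y, hxy, hyz⟩ ⟨x', z'⟩ ⟨y', hxy', hyz'⟩ h
          simp only at h
          subst h
          have hy : y = y' := (a.inj' hxy hxy').mp rfl
          subst hy
          have hz : z = z' := (b.inj' hyz hyz').mp rfl
          simp [hz]
        calc ({p : γ × γ | ∃ y, (p.1, y) ∈ a.graph ∧ (y, p.2) ∈ b.graph}).ncard
            ≤ (Prod.fst '' a.graph).ncard := by
              refine Set.ncard_le_ncard_of_injOn Prod.fst ?_ hinj (a.finite'.image _)
              rintro ⟨x, z⟩ hp
              exact ⟨(x, hp.choose), hp.choose_spec.1, rfl⟩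
          _ ≤ a.graph.ncard := Set.ncard_image_le a.finite'
          _ ≤ n := a.card_le' }

theorem mul_graph (a b : SymInvSg γ n) :
    (a * b).graph = {p : γ × γ | ∃ y, (p.1, y) ∈ a.graph ∧ (y, p.2) ∈ b.graph} := rfl

instance : Semigroup (SymInvSg γ n) where
  mul_assoc a b c := by
    refine ext' ?_
    simp only [mul_graph]
    ext ⟨x, w⟩
    constructor
    · rintro ⟨z, ⟨y, hxy, hyz⟩, hzw⟩
      exact ⟨y, hxy, z, hyz, hzw⟩
    · rintro ⟨y, hxy, z, hyz, hzw⟩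
      exact ⟨z, ⟨y, hxy, hyz⟩, hzw⟩

/-- The zero of `𝓘_γ^n` is the empty partial map. -/
instance : Zero (SymInvSg γ n) :=
  ⟨{ graph := ∅
     inj' := by simp
     finite' := Set.finite_empty
     card_le' := by simp }⟩

/-- The natural partial order on the inverse semigroup `𝓘_γ^n`:
`α ≼ β` iff the graph of `α` is contained in the graph of `β`. -/
instance : PartialOrder (SymInvSg γ n) where
  le a b := a.graph ⊆ b.graph
  le_refl a := subset_rfl
  le_trans a b c h₁ h₂ := Set.Subset.trans h₁ h₂
  le_antisymm a b h₁ h₂ := ext' (subset_antisymm h₁ h₂)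

/-- The rank of a partial bijection: the cardinality of its domain
(equivalently, of its graph). -/
noncomputable def rank (a : SymInvSg γ n) : ℕ := a.graph.ncard

/-- `𝓘_A^n`: the subsemigroup of partial bijections with domain and range inside `A`. -/
def restrictedTo (A : Set γ) : Set (SymInvSg γ n) :=
  {α | ∀ p ∈ α.graph, p.1 ∈ A ∧ p.2 ∈ A}

end SymInvSg

/-- A topology is shift-continuous when all left and right translations are continuous,
i.e. the space is a semitopological semigroup. -/
def ShiftContinuous (X : Type*) [TopologicalSpace X] [Mul X] : Prop :=
  ∀ a : X, Continuous (fun x => a * x) ∧ Continuous (fun x => x * a)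

/-- A space is feebly compact if every locally finite family of nonempty open sets is finite. -/
def FeeblyCompact (X : Type*) [TopologicalSpace X] : Prop :=
  ∀ F : Set (Set X), (∀ U ∈ F, IsOpen U ∧ U.Nonempty) →
    LocallyFinite (fun U : F => (U : Set X)) → F.Finite

/-- A space is sequentially pracompact if it has a dense subset `D` such that every
sequence in `D` has a convergent subsequence. -/
def SequentiallyPracompact (X : Type*) [TopologicalSpace X] : Prop :=
  ∃ D : Set X, Dense D ∧ ∀ u : ℕ → X, (∀ k, u k ∈ D) →
    ∃ (x : X) (φ : ℕ → ℕ), StrictMono φ ∧ Filter.Tendsto (u ∘ φ) Filter.atTop (nhds x)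

/-- A space is totally countably pracompact if it has a dense subset `D` such that every
sequence in `D` has a subsequence whose closure is compact. -/
def TotallyCountablyPracompact (X : Type*) [TopologicalSpace X] : Prop :=
  ∃ D : Set X, Dense D ∧ ∀ u : ℕ → X, (∀ k, u k ∈ D) →
    ∃ φ : ℕ → ℕ, StrictMono φ ∧ IsCompact (closure (Set.range (u ∘ φ)))

/-- A space is countably pracompact if it has a dense subset `A` such that every infinite
subset of `A` has an accumulation point in the space. -/
def CountablyPracompact (X : Type*) [TopologicalSpace X] : Prop :=
  ∃ A : Set X, Dense A ∧ ∀ B ⊆ A, B.Infinite → ∃ x : X, AccPt x (Filter.principal B)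

/-- A space is ω-bounded-pracompact if it has a dense subset `D` such that every countable
subset of `D` has compact closure. -/
def OmegaBoundedPracompact (X : Type*) [TopologicalSpace X] : Prop :=
  ∃ D : Set X, Dense D ∧ ∀ C ⊆ D, C.Countable → IsCompact (closure C)

/-- A space is feebly ω-bounded if for every sequence of nonempty open sets there is a
compact set meeting all of them. -/
def FeeblyOmegaBounded (X : Type*) [TopologicalSpace X] : Prop :=
  ∀ U : ℕ → Set X, (∀ k, IsOpen (U k) ∧ (U k).Nonempty) →
    ∃ K : Set X, IsCompact K ∧ ∀ k, (K ∩ U k).Nonempty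

namespace SymInvSg

variable {γ : Type*} {n : ℕ}

/-- The inverse partial bijection. -/
def inverse (a : SymInvSg γ n) : SymInvSg γ n where
  graph := Prod.swap '' a.graph
  inj' := by
    rintro x y x' y' ⟨⟨p, q⟩, h, h1⟩ ⟨⟨p', q'⟩, h', h1'⟩
    simp only [Prod.swap_prod_mk, Prod.mk.injEq] at h1 h1'
    obtain ⟨rfl, rfl⟩ := h1
    obtain ⟨rfl, rfl⟩ := h1'
    exact (a.inj' h h').symm
  finite' := a.finite'.image _
  card_le' := (Set.ncard_image_le a.finite').trans a.card_le'

theorem mem_inverse {a : SymInvSg γ n} {x y : γ} :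
    (x, y) ∈ a.inverse.graph ↔ (y, x) ∈ a.graph := by
  simp [inverse]

/-- The partial bijection with graph `{(a, b)}`. -/
def single (hn : 0 < n) (a b : γ) : SymInvSg γ n where
  graph := {(a, b)}
  inj' := by
    rintro x y x' y' h h'
    simp_all
  finite' := Set.finite_singleton _
  card_le' := by
    rw [Set.ncard_singleton]
    exact hn

theorem le_iff_inverse_mul_mul (a x : SymInvSg γ n) :
    a ≤ x ↔ a.inverse * x * a.inverse = a.inverse := by
  constructor
  · intro h
    refine ext' (Set.ext ?_)
    rintro ⟨p, q⟩
    constructor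
    · rintro ⟨y, ⟨u, hpu, huy⟩, hyq⟩
      have hu : u = q := (x.inj' huy (h (mem_inverse.1 hyq))).2 rfl
      exact hu ▸ hpu
    · intro hpq
      exact ⟨p, ⟨q, hpq, h (mem_inverse.1 hpq)⟩, hpq⟩
  · rintro h ⟨u, v⟩ huv
    have hm : (v, u) ∈ (a.inverse * x * a.inverse).graph := by
      rw [h]
      exact mem_inverse.2 huv
    obtain ⟨y, ⟨w, hvw, hwy⟩, hyu⟩ := hm
    have hw : w = u := (a.inj' (mem_inverse.1 hvw) huv).2 rfl
    have hy : y = v := (a.inj' (mem_inverse.1 hyu) huv).1 rfl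
    subst hw hy
    exact hwy

theorem finite_range_mul_mul (a : SymInvSg γ n) :
    (Set.range fun x : SymInvSg γ n => a * x * a).Finite := by
  have hfin := ((a.finite'.image Prod.fst).prod (a.finite'.image Prod.snd)).finite_subsets
  refine Set.Finite.of_finite_image (f := graph) (hfin.subset ?_) fun _ _ _ _ h => ext' h
  rintro _ ⟨_, ⟨x, rfl⟩, rfl⟩ ⟨p, q⟩ ⟨y, ⟨u, hpu, -⟩, hyq⟩
  exact ⟨⟨_, hpu, rfl⟩, ⟨_, hyq, rfl⟩⟩

theorem isClopen_Ici [TopologicalSpace (SymInvSg γ n)] [T1Space (SymInvSg γ n)]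
    (hsc : ShiftContinuous (SymInvSg γ n)) (a : SymInvSg γ n) : IsClopen (Set.Ici a) := by
  have hc : Continuous fun x => a.inverse * x * a.inverse :=
    (hsc a.inverse).2.comp (hsc a.inverse).1
  constructor
  · have : Set.Ici a = (fun x => a.inverse * x * a.inverse) ⁻¹' {a.inverse} := by
      ext x
      exact le_iff_inverse_mul_mul a x
    rw [this]
    exact isClosed_singleton.preimage hc
  · -- The finitely many other values form a closed set, whose preimage is the complement.
    have : Set.Ici a = (fun x => a.inverse * x * a.inverse) ⁻¹'
        ((Set.range fun x => a.inverse * x * a.inverse) \ {a.inverse})ᶜ := by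
      ext x
      simp [le_iff_inverse_mul_mul]
    rw [this]
    exact ((finite_range_mul_mul a.inverse).sdiff.isClosed.isOpen_compl).preimage hc

theorem Ici_eq_singleton {a : SymInvSg γ n} (ha : a.rank = n) : Set.Ici a = {a} := by
  ext x
  simp only [Set.mem_Ici, Set.mem_singleton_iff]
  refine ⟨fun h => ?_, fun h => h ▸ le_rfl⟩
  refine (ext' (Set.eq_of_subset_of_ncard_le h ?_ x.finite')).symm
  exact x.card_le'.trans ha.ge

/-- Top-rank extensions of `β` inside `𝓘_A^n`, any two of which have only the pairs of `β` in
common. -/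
theorem exists_extensions {A : Set γ} (hA : A.Infinite) {β : SymInvSg γ n}
    (hβ : β ∈ (restrictedTo A : Set (SymInvSg γ n))) :
    ∃ u : ℕ → SymInvSg γ n, (∀ i, β ≤ u i) ∧ (∀ i, u i ∈ (restrictedTo A : Set (SymInvSg γ n))) ∧
      (∀ i, (u i).rank = n) ∧
      ∀ p ∉ β.graph, ∀ i j, p ∈ (u i).graph → p ∈ (u j).graph → i = j := by
  set F : Set γ := Prod.fst '' β.graph ∪ Prod.snd '' β.graph with hF
  have hFfin : F.Finite := (β.finite'.image _).union (β.finite'.image _)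
  have hinf : (A \ F).Infinite := hA.sdiff hFfin
  let e : ℕ ↪ ↥(A \ F) := hinf.natEmbedding
  let f : ℕ → Fin (n - β.graph.ncard) → γ := fun i j => e (Nat.pair i j)
  have hfA : ∀ i j, f i j ∈ A := fun i j => (e (Nat.pair i j)).2.1
  have hfF : ∀ i j, f i j ∉ F := fun i j => (e (Nat.pair i j)).2.2
  have hfinj : ∀ {i j i' j'}, f i j = f i' j' → i = i' ∧ j = j' := by
    intro i j i' j' h
    have h2 := e.injective (Subtype.ext h)
    rw [Nat.pair_eq_pair] at h2
    exact ⟨h2.1, Fin.ext h2.2⟩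
  have hfst : ∀ {x y}, (x, y) ∈ β.graph → x ∈ F := fun h => Or.inl ⟨_, h, rfl⟩
  have hsnd : ∀ {x y}, (x, y) ∈ β.graph → y ∈ F := fun h => Or.inr ⟨_, h, rfl⟩
  let G : ℕ → Set (γ × γ) := fun i => Set.range fun j => (f i j, f i j)
  have hGfin : ∀ i, (G i).Finite := fun i => Set.finite_range _
  have hcard : ∀ i, (β.graph ∪ G i).ncard = n := by
    intro i
    rw [Set.ncard_union_eq _ β.finite' (hGfin i)]
    · have hG : (G i).ncard = n - β.graph.ncard := by
        have hi : Function.Injective fun j => (f i j, f i j) :=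
          fun j j' h => (hfinj (Prod.ext_iff.1 h).1).2
        simp only [G]
        rw [← Set.image_univ, Set.ncard_image_of_injective _ hi, Set.ncard_univ, Nat.card_fin]
      have := β.card_le'
      omega
    · rw [Set.disjoint_left]
      rintro p hp ⟨j, rfl⟩
      exact hfF i j (hfst hp)
  refine ⟨fun i => ⟨β.graph ∪ G i, ?_, β.finite'.union (hGfin i), (hcard i).le⟩,
    fun i => Set.subset_union_left, ?_, hcard, ?_⟩
  · rintro x y x' y' (h | ⟨j, h⟩) (h' | ⟨j', h'⟩)
    · exact β.inj' h h'
    · obtain ⟨rfl, rfl⟩ := Prod.ext_iff.1 h'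
      exact ⟨fun e => (hfF i j' (e.subst (hfst h))).elim, fun e => (hfF i j' (e.subst (hsnd h))).elim⟩
    · obtain ⟨rfl, rfl⟩ := Prod.ext_iff.1 h
      exact ⟨fun e => (hfF i j (e.symm.subst (hfst h'))).elim,
        fun e => (hfF i j (e.symm.subst (hsnd h'))).elim⟩
    · obtain ⟨rfl, rfl⟩ := Prod.ext_iff.1 h
      obtain ⟨rfl, rfl⟩ := Prod.ext_iff.1 h'
      exact Iff.rfl
  · rintro i p (h | ⟨j, rfl⟩)
    · exact hβ p h
    · exact ⟨hfA i j, hfA i j⟩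
  · rintro p hp i i' (h | ⟨j, rfl⟩) (h' | ⟨j', h'⟩)
    · exact absurd h hp
    · exact absurd h hp
    · exact absurd h' hp
    · exact (hfinj (Prod.ext_iff.1 h').1).1.symm

end SymInvSg

/-- If `𝓘_λ^n` is an ω-bounded-pracompact `T₁`-semitopological semigroup
(`n` a positive integer, `λ` an infinite cardinal) and `A ⊆ λ` is countably infinite, then
for every `α ∈ 𝓘_A^n` the set `↑_≼^A α ∩ (𝓘_A^n ∖ 𝓘_A^{n-1})` is dense in the subspace
`↑_≼^A α = ↑_≼ α ∩ 𝓘_A^n`. -/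
theorem dense_top_rank_in_upperSet_restrictedTo {γ : Type*} [Infinite γ] {n : ℕ}
    (hn : 0 < n)
    [TopologicalSpace (SymInvSg γ n)] [T1Space (SymInvSg γ n)]
    (hsc : ShiftContinuous (SymInvSg γ n))
    (hωb : OmegaBoundedPracompact (SymInvSg γ n))
    (A : Set γ) (hAc : A.Countable) (hAi : A.Infinite) :
    ∀ α ∈ (SymInvSg.restrictedTo A : Set (SymInvSg γ n)),
      (Set.Ici α ∩ SymInvSg.restrictedTo A) ⊆
        closure ((Set.Ici α ∩ SymInvSg.restrictedTo A) ∩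
          ((SymInvSg.restrictedTo A : Set (SymInvSg γ n)) \
            {β : SymInvSg γ n | SymInvSg.rank β ≤ n - 1})) := by
  intro α _ β hβ
  obtain ⟨hαβ, hβA⟩ := hβ
  obtain ⟨u, hle, huA, hrank, hsep⟩ := SymInvSg.exists_extensions hAi hβA
  obtain ⟨D, hD, hcpt⟩ := hωb
  have huD : Set.range u ⊆ D := by
    rintro _ ⟨i, rfl⟩
    have hopen := (SymInvSg.isClopen_Ici hsc (u i)).isOpen
    rw [SymInvSg.Ici_eq_singleton (hrank i)] at hopen
    obtain ⟨y, hy, hyD⟩ := hD.inter_open_nonempty _ hopen (Set.singleton_nonempty _)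
    exact hy ▸ hyD
  obtain ⟨x, -, hx⟩ := (hcpt _ huD (Set.countable_range u)).exists_mapClusterPt_of_frequently
    (l := Filter.cofinite) (f := u) (Filter.Eventually.frequently
      (Filter.Eventually.of_forall fun i => subset_closure ⟨i, rfl⟩))
  have hβx : β ≤ x :=
    (SymInvSg.isClopen_Ici hsc β).isClosed.mem_of_mapClusterPt hx
      (Filter.Eventually.of_forall hle)
  have hxβ : x ≤ β := by
    rintro ⟨a, b⟩ hab
    by_contra hnot
    have hmem : Set.Ici (SymInvSg.single hn a b) ∈ 𝓝 x :=
      (SymInvSg.isClopen_Ici hsc _).isOpen.mem_nhds (Set.singleton_subset_iff.2 hab)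
    have hfreq := hx.frequently hmem
    rw [Filter.frequently_cofinite_iff_infinite] at hfreq
    refine hfreq (Set.Subsingleton.finite fun i hi j hj => ?_)
    exact hsep _ hnot i j (Set.singleton_subset_iff.1 hi) (Set.singleton_subset_iff.1 hj)
  obtain rfl : x = β := le_antisymm hxβ hβx
  refine isClosed_closure.mem_of_mapClusterPt hx (Filter.Eventually.of_forall fun i => ?_)
  refine subset_closure ⟨⟨le_trans hαβ (hle i), huA i⟩, huA i, ?_⟩
  have := hrank i
  simp only [Set.mem_ofPred_eq]
  omega
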